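/- Assume h is convex and satisfies the control condition: there exist K, γ₀ > 0 such that |d·h'(c·d)| ≤ K(h(d)+1) for all d > 0 and all c with |c−1| ≤ γ₀. Then there exists λ₀ > 0 such that for every λ > λ₀, any minimizer r of Î over 𝒜_λ satisfies r(0) > 0; in fact, for d ∈ (0,1) and the test function u(R) = λ (dRⁿ + 1 − d)^{1/n} one has Î(u) < Î(λR) for all sufficiently large λ. -/

import Mathlib

open Real MeasureTheory Filter Set
open scoped ENNReal NNReal

noncomputable section

/-- Radial stored energy `Φ(q, v, …, v) = (κ/n)(qⁿ + (n−1)vⁿ) + h(q v^{n−1})`,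
the restriction of `Φ(v₁,…,vₙ) = (κ/n)(v₁ⁿ+⋯+vₙⁿ) + h(v₁⋯vₙ)` to points
`(q, v, …, v)`. -/
def Phi (n : ℕ) (κ : ℝ) (h : ℝ → ℝ) (q v : ℝ) : ℝ :=
  (κ / n) * (q ^ n + ((n : ℝ) - 1) * v ^ n) + h (q * v ^ (n - 1))

/-- `Φ_{,1}(q, v, …, v) = κ q^{n−1} + v^{n−1} h'(q v^{n−1})`. -/
def Phi1 (n : ℕ) (κ : ℝ) (h' : ℝ → ℝ) (q v : ℝ) : ℝ :=
  κ * q ^ (n - 1) + v ^ (n - 1) * h' (q * v ^ (n - 1))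

/-- `Φ_{,2}(q, v, …, v) = κ v^{n−1} + q v^{n−2} h'(q v^{n−1})`. -/
def Phi2 (n : ℕ) (κ : ℝ) (h' : ℝ → ℝ) (q v : ℝ) : ℝ :=
  κ * v ^ (n - 1) + q * v ^ (n - 2) * h' (q * v ^ (n - 1))

/-- Radial Cauchy stress `T(q,v) = v^{1−n} Φ_{,1}(q,v,…,v) = κ(q/v)^{n−1} + h'(q v^{n−1})`. -/
def Tstress (n : ℕ) (κ : ℝ) (h' : ℝ → ℝ) (q v : ℝ) : ℝ :=
  κ * (q / v) ^ (n - 1) + h' (q * v ^ (n - 1))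

/-- The determinant function `δ(R) = r'(R) (r(R)/R)^{n−1}`. -/
def del (n : ℕ) (r r' : ℝ → ℝ) (R : ℝ) : ℝ :=
  r' R * (r R / R) ^ (n - 1)

/-- Hypotheses on `h : (0,∞) → [0,∞)`: it is `C²` with derivative `h'` and second
derivative `h''`, `h'' > 0`, `h(d) → ∞` as `d → 0⁺`, `h(d)/d → ∞` as `d → ∞`,
`h'(d) → −∞` as `d → 0⁺` and `h'(d) → ∞` as `d → ∞`. -/
structure GoodH (h h' h'' : ℝ → ℝ) : Prop where
  nonneg : ∀ d : ℝ, 0 < d → 0 ≤ h d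
  deriv1 : ∀ d : ℝ, 0 < d → HasDerivAt h (h' d) d
  deriv2 : ∀ d : ℝ, 0 < d → HasDerivAt h' (h'' d) d
  cont2 : ContinuousOn h'' (Set.Ioi 0)
  hpp_pos : ∀ d : ℝ, 0 < d → 0 < h'' d
  lim_zero : Tendsto h (nhdsWithin 0 (Set.Ioi 0)) atTop
  lim_growth : Tendsto (fun d => h d / d) atTop atTop
  dlim_zero : Tendsto h' (nhdsWithin 0 (Set.Ioi 0)) atBot
  dlim_top : Tendsto h' atTop atTop

/-- `r ∈ C²((0,1])`, with `r, r' > 0` on `(0,1]`, solving the radial equilibrium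
equation `(d/dR)[R^{n−1} Φ_{,1}(r(R))] = (n−1) R^{n−2} Φ_{,2}(r(R))`. -/
structure RadialSol (n : ℕ) (κ : ℝ) (h' : ℝ → ℝ) (r r' r'' : ℝ → ℝ) : Prop where
  pos : ∀ R ∈ Set.Ioc (0:ℝ) 1, 0 < r R
  derivPos : ∀ R ∈ Set.Ioc (0:ℝ) 1, 0 < r' R
  hasDeriv : ∀ R ∈ Set.Ioc (0:ℝ) 1, HasDerivWithinAt r (r' R) (Set.Ioc 0 1) R
  hasDeriv2 : ∀ R ∈ Set.Ioc (0:ℝ) 1, HasDerivWithinAt r' (r'' R) (Set.Ioc 0 1) R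
  cont2 : ContinuousOn r'' (Set.Ioc 0 1)
  equil : ∀ R ∈ Set.Ioc (0:ℝ) 1,
    HasDerivWithinAt (fun s => s ^ (n - 1) * Phi1 n κ h' (r' s) (r s / s))
      (((n : ℝ) - 1) * R ^ (n - 2) * Phi2 n κ h' (r' R) (r R / R)) (Set.Ioc 0 1) R


/-- Modified radial stored energy
`Φ̂(q,v,…,v) = (κ/n)qⁿ + h(q v^{n−1}) + κ q v^{n−1}((n−1)/n + ln(v^{n−1}))`. -/
def PhiHat (n : ℕ) (κ : ℝ) (h : ℝ → ℝ) (q v : ℝ) : ℝ :=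
  (κ / n) * q ^ n + h (q * v ^ (n - 1)) +
    κ * (q * v ^ (n - 1)) * (((n : ℝ) - 1) / n + ((n : ℝ) - 1) * Real.log v)

/-- `Φ̂_{,1}(q,v,…,v) = κ q^{n−1} + v^{n−1} h'(q v^{n−1}) + κ v^{n−1}((n−1)/n + (n−1) ln v)`. -/
def PhiHat1 (n : ℕ) (κ : ℝ) (h' : ℝ → ℝ) (q v : ℝ) : ℝ :=
  κ * q ^ (n - 1) + v ^ (n - 1) * h' (q * v ^ (n - 1)) +
    κ * v ^ (n - 1) * (((n : ℝ) - 1) / n + ((n : ℝ) - 1) * Real.log v)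

/-- `Φ̂_{,2}(q,v,…,v) = q v^{n−2}(h'(q v^{n−1}) + κ + κ(n−1)(1/n + ln v))`. -/
def PhiHat2 (n : ℕ) (κ : ℝ) (h' : ℝ → ℝ) (q v : ℝ) : ℝ :=
  q * v ^ (n - 2) *
    (h' (q * v ^ (n - 1)) + κ + κ * (((n : ℝ) - 1) * (1 / n + Real.log v)))

/-- Modified radial Cauchy stress
`T̂(q,v) = κ(q/v)^{n−1} + h'(q v^{n−1}) + (n−1)κ(1/n + ln v)`. -/
def THat (n : ℕ) (κ : ℝ) (h' : ℝ → ℝ) (q v : ℝ) : ℝ :=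
  κ * (q / v) ^ (n - 1) + h' (q * v ^ (n - 1)) +
    ((n : ℝ) - 1) * κ * (1 / n + Real.log v)

/-- `r ∈ C²((0,1])`, with `r, r' > 0` on `(0,1]`, solving the modified radial
equilibrium equation `(d/dR)[R^{n−1} Φ̂_{,1}(r(R))] = (n−1) R^{n−2} Φ̂_{,2}(r(R))`. -/
structure ModRadialSol (n : ℕ) (κ : ℝ) (h' : ℝ → ℝ) (r r' r'' : ℝ → ℝ) : Prop where
  pos : ∀ R ∈ Set.Ioc (0:ℝ) 1, 0 < r R
  derivPos : ∀ R ∈ Set.Ioc (0:ℝ) 1, 0 < r' R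
  hasDeriv : ∀ R ∈ Set.Ioc (0:ℝ) 1, HasDerivWithinAt r (r' R) (Set.Ioc 0 1) R
  hasDeriv2 : ∀ R ∈ Set.Ioc (0:ℝ) 1, HasDerivWithinAt r' (r'' R) (Set.Ioc 0 1) R
  cont2 : ContinuousOn r'' (Set.Ioc 0 1)
  equil : ∀ R ∈ Set.Ioc (0:ℝ) 1,
    HasDerivWithinAt (fun s => s ^ (n - 1) * PhiHat1 n κ h' (r' s) (r s / s))
      (((n : ℝ) - 1) * R ^ (n - 2) * PhiHat2 n κ h' (r' R) (r R / R)) (Set.Ioc 0 1) R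


/-- The admissible set `𝒜_λ`: `r ∈ W^{1,1}(0,1)` (absolutely continuous with
integrable derivative `r'`), `r(1) = λ`, `r' > 0` a.e. in `(0,1)` and `r(0) ≥ 0`. -/
structure Adm (lam : ℝ) (r r' : ℝ → ℝ) : Prop where
  intg : IntegrableOn r' (Set.Ioc 0 1)
  ftc : ∀ R ∈ Set.Icc (0:ℝ) 1, r R = r 0 + ∫ t in Set.Ioc 0 R, r' t
  derivPos : ∀ᵐ R ∂(volume.restrict (Set.Ioc (0:ℝ) 1)), 0 < r' R
  bc : r 1 = lam
  c0 : 0 ≤ r 0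

/-- The modified energy functional `Î`, valued in `EReal` (it is the integral of
`R^{n−1} Φ̂(r'(R), r(R)/R, …, r(R)/R)` minus `(κ(n−1)/n) λⁿ ln λ`, the integral being
defined as the difference of the lower integrals of the positive and negative parts). -/
def IHatE (n : ℕ) (κ lam : ℝ) (h : ℝ → ℝ) (r r' : ℝ → ℝ) : EReal :=
  (((∫⁻ R in Set.Ioc (0:ℝ) 1,
      ENNReal.ofReal (R ^ (n - 1) * PhiHat n κ h (r' R) (r R / R))) : ℝ≥0∞) : EReal)
  - (((∫⁻ R in Set.Ioc (0:ℝ) 1,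
      ENNReal.ofReal (-(R ^ (n - 1) * PhiHat n κ h (r' R) (r R / R)))) : ℝ≥0∞) : EReal)
  - ((κ * ((n : ℝ) - 1) / n * lam ^ n * Real.log lam : ℝ) : EReal)

/-!
If `r 0 = 0`, the energy of `r` is bounded below by a null Lagrangian. An affine minorant of the
convex function `h` and Bernoulli's inequality `n q vⁿ⁻¹ ≤ qⁿ + (n - 1) vⁿ` minorize the energy
density by a multiple of `Rⁿ⁻¹` plus the derivatives of multiples of `rⁿ` and `rⁿ log (r / R)`.
The latter has boundary value `λⁿ log λ` at `R = 1`, which is exactly what `Î` subtracts, and the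
homogeneous deformation `λR` attains equality when the minorant touches `h` at `λⁿ`. Since
`rⁿ log (r / R)` need not vanish at the centre, `log R` is replaced by `log ε` for `R < ε`; the
error is a multiple of `r(ε)ⁿ`. Thus `λR` has the least energy among deformations without a cavity.

A deformation `λv` with `v(1) = 1` and constant determinant `d < 1` of `v` has energy
`A λⁿ + h(d λⁿ)/n - κ(1 - d)(n - 1)/n · λⁿ log λ`, whereas that of `λR` is `κλⁿ/n + h(λⁿ)/n`. By
convexity `h(λⁿ) - h(d λⁿ)` is bounded below by a multiple of `λⁿ`, so the logarithm makes the
cavity favourable for large `λ`.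
-/

lemma coe_integral_eq_lintegral_sub_lintegral {α : Type*} [MeasurableSpace α] {μ : Measure α}
    {f : α → ℝ} (hf : Integrable f μ) :
    ((∫ x, f x ∂μ : ℝ) : EReal) =
      ((∫⁻ x, ENNReal.ofReal (f x) ∂μ : ℝ≥0∞) : EReal) -
        ((∫⁻ x, ENNReal.ofReal (-f x) ∂μ : ℝ≥0∞) : EReal) := by
  have hneg : ∫⁻ x, ENNReal.ofReal (-f x) ∂μ ≠ ⊤ := hf.neg.lintegral_lt_top.ne
  rw [integral_eq_lintegral_pos_part_sub_lintegral_neg_part hf, EReal.coe_sub,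
    EReal.coe_ennreal_toReal hf.lintegral_lt_top.ne, EReal.coe_ennreal_toReal hneg]

lemma coe_integral_le_lintegral_sub_lintegral {α : Type*} [MeasurableSpace α] {μ : Measure α}
    {f g : α → ℝ} (hf : Integrable f μ) (hfg : f ≤ᵐ[μ] g) :
    ((∫ x, f x ∂μ : ℝ) : EReal) ≤
      ((∫⁻ x, ENNReal.ofReal (g x) ∂μ : ℝ≥0∞) : EReal) -
        ((∫⁻ x, ENNReal.ofReal (-g x) ∂μ : ℝ≥0∞) : EReal) := by
  rw [coe_integral_eq_lintegral_sub_lintegral hf]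
  refine EReal.sub_le_sub ?_ ?_ <;>
    refine EReal.coe_ennreal_le_coe_ennreal_iff.2 (lintegral_mono_ae ?_) <;>
    filter_upwards [hfg] with x hx
  · exact ENNReal.ofReal_le_ofReal hx
  · exact ENNReal.ofReal_le_ofReal (neg_le_neg hx)

lemma integral_pos_of_ae_pos {α : Type*} [MeasurableSpace α] {μ : Measure α} [NeZero μ]
    {f : α → ℝ} (hf : Integrable f μ) (hpos : ∀ᵐ x ∂μ, 0 < f x) : 0 < ∫ x, f x ∂μ := by
  have hnonneg : 0 ≤ᵐ[μ] f := hpos.mono fun _ hx => hx.le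
  refine (integral_nonneg_of_ae hnonneg).lt_of_ne' fun h0 => ?_
  have hzero := (integral_eq_zero_iff_of_nonneg_ae hnonneg hf).1 h0
  obtain ⟨x, hx, hx0⟩ := (hpos.and hzero).exists
  exact hx.ne' hx0

lemma integral_Ioc_pow_sub_one {n : ℕ} (hn : n ≠ 0) :
    ∫ R in Ioc (0 : ℝ) 1, R ^ (n - 1) = 1 / n := by
  rw [← intervalIntegral.integral_of_le zero_le_one, integral_pow, Nat.sub_add_cancel (by omega)]
  simp [Nat.cast_pred (Nat.pos_of_ne_zero hn), hn]

lemma integrableOn_Ioc_pow (k : ℕ) : IntegrableOn (fun R : ℝ => R ^ k) (Ioc 0 1) :=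
  (continuous_pow k).integrableOn_Ioc

lemma absolutelyContinuousOnInterval_comp_of_lipschitzOnWith {X Y : Type*} [PseudoMetricSpace X]
    [PseudoMetricSpace Y] {φ : X → Y} {f : ℝ → X} {C : ℝ≥0} {S : Set X} {a b : ℝ}
    (hφ : LipschitzOnWith C φ S) (hf : AbsolutelyContinuousOnInterval f a b)
    (hfS : MapsTo f (uIcc a b) S) : AbsolutelyContinuousOnInterval (fun x => φ (f x)) a b := by
  have hlim := Tendsto.const_mul (C : ℝ) hf
  rw [mul_zero] at hlim
  refine squeeze_zero' (Eventually.of_forall fun _ => Finset.sum_nonneg fun _ _ => dist_nonneg)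
    (eventually_inf_principal.2 (Eventually.of_forall fun E hE => ?_)) hlim
  rw [Finset.mul_sum]
  exact Finset.sum_le_sum fun i hi => hφ.dist_le_mul _ (hfS (hE.1 i hi).1) _ (hfS (hE.1 i hi).2)

lemma absolutelyContinuousOnInterval_comp_of_contDiffOn {E F : Type*} [NormedAddCommGroup E]
    [NormedSpace ℝ E] [NormedAddCommGroup F] [NormedSpace ℝ F] {φ : E → F} {f : ℝ → E} {S : Set E}
    {a b : ℝ} (hφ : ContDiffOn ℝ 1 φ S) (hSconv : Convex ℝ S) (hS : IsCompact S)
    (hf : AbsolutelyContinuousOnInterval f a b) (hfS : MapsTo f (uIcc a b) S) :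
    AbsolutelyContinuousOnInterval (fun x => φ (f x)) a b := by
  obtain ⟨C, hC⟩ := hφ.exists_lipschitzOnWith one_ne_zero hSconv hS
  exact absolutelyContinuousOnInterval_comp_of_lipschitzOnWith hC hf hfS

lemma absolutelyContinuousOnInterval_comp_of_contDiff {E F : Type*} [NormedAddCommGroup E]
    [NormedSpace ℝ E] [ProperSpace E] [NormedAddCommGroup F] [NormedSpace ℝ F] {φ : E → F}
    {f : ℝ → E} {a b : ℝ} (hφ : ContDiff ℝ 1 φ) (hf : AbsolutelyContinuousOnInterval f a b) :
    AbsolutelyContinuousOnInterval (fun x => φ (f x)) a b := by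
  obtain ⟨M, hM⟩ := hf.exists_bound
  exact absolutelyContinuousOnInterval_comp_of_contDiffOn hφ.contDiffOn (convex_closedBall 0 M)
    (isCompact_closedBall 0 M) hf fun x hx => mem_closedBall_zero_iff.2 (hM x hx)

lemma absolutelyContinuousOnInterval_pow {f : ℝ → ℝ} {a b : ℝ}
    (hf : AbsolutelyContinuousOnInterval f a b) (n : ℕ) :
    AbsolutelyContinuousOnInterval (fun x => f x ^ n) a b :=
  absolutelyContinuousOnInterval_comp_of_contDiff (contDiff_id.pow n) hf

lemma absolutelyContinuousOnInterval_congr {X : Type*} [PseudoMetricSpace X] {f g : ℝ → X}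
    {a b : ℝ} (hf : AbsolutelyContinuousOnInterval f a b) (hfg : EqOn f g (uIcc a b)) :
    AbsolutelyContinuousOnInterval g a b := by
  refine Tendsto.congr' ?_ hf
  refine eventually_inf_principal.2 (Eventually.of_forall fun E hE => ?_)
  exact Finset.sum_congr rfl fun i hi => by rw [hfg (hE.1 i hi).1, hfg (hE.1 i hi).2]

lemma integrableOn_Ioc_deriv_of_absolutelyContinuous {f : ℝ → ℝ} {a b : ℝ} (hab : a ≤ b)
    (hf : AbsolutelyContinuousOnInterval f a b) : IntegrableOn (deriv f) (Ioc a b) :=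
  (intervalIntegrable_iff_integrableOn_Ioc_of_le hab).1 hf.intervalIntegrable_deriv

lemma integral_Ioc_deriv_of_absolutelyContinuous {f : ℝ → ℝ} {a b : ℝ} (hab : a ≤ b)
    (hf : AbsolutelyContinuousOnInterval f a b) : ∫ x in Ioc a b, deriv f x = f b - f a := by
  rw [← intervalIntegral.integral_of_le hab, hf.integral_deriv_eq_sub]

lemma continuous_pow_mul_log {n : ℕ} (hn : n ≠ 0) : Continuous fun x : ℝ => x ^ n * log x := by
  obtain ⟨k, rfl⟩ := Nat.exists_eq_succ_of_ne_zero hn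
  simp only [pow_succ, mul_assoc]
  exact (continuous_pow k).mul continuous_mul_log

lemma hasDerivAt_pow_mul_log {n : ℕ} (hn : 2 ≤ n) (x : ℝ) :
    HasDerivAt (fun x : ℝ => x ^ n * log x) (n * (x ^ (n - 1) * log x) + x ^ (n - 1)) x := by
  rcases eq_or_ne x 0 with rfl | hx
  · have hlim := (continuous_pow_mul_log (n := n - 1) (by omega)).tendsto 0
    rw [hasDerivAt_iff_tendsto_slope]
    have hzero : (0 : ℝ) ^ (n - 1) = 0 := zero_pow (by omega)
    simp only [hzero, zero_mul, mul_zero, add_zero] at hlim ⊢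
    refine (hlim.mono_left nhdsWithin_le_nhds).congr' ?_
    filter_upwards [self_mem_nhdsWithin] with y hy
    rw [slope_def_field, ← pow_sub_one_mul (by omega : n ≠ 0) y]
    have : y ≠ 0 := hy
    simp only [log_zero, mul_zero, sub_zero]
    field_simp
  · refine ((hasDerivAt_pow n x).fun_mul (Real.hasDerivAt_log hx)).congr_deriv ?_
    rw [← pow_sub_one_mul (by omega : n ≠ 0) x]
    field_simp

lemma contDiff_one_pow_mul_log {n : ℕ} (hn : 2 ≤ n) :
    ContDiff ℝ 1 fun x : ℝ => x ^ n * log x := by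
  refine contDiff_one_iff_deriv.2
    ⟨fun x => (hasDerivAt_pow_mul_log hn x).differentiableAt, ?_⟩
  rw [funext fun x => (hasDerivAt_pow_mul_log hn x).deriv]
  exact ((continuous_pow_mul_log (by omega)).const_mul _).add (continuous_pow _)

lemma absolutelyContinuousOnInterval_log_max {a b ε : ℝ} (hε : 0 < ε) :
    AbsolutelyContinuousOnInterval (fun x => log (max x ε)) a b := by
  have hmax : AbsolutelyContinuousOnInterval (fun x => max x ε) a b :=
    (LipschitzWith.id.max_const ε).lipschitzOnWith.absolutelyContinuousOnInterval
  refine absolutelyContinuousOnInterval_comp_of_contDiffOn (S := Icc ε (max (max a b) ε))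
    (contDiffOn_log.mono fun x hx => ?_) (convex_Icc _ _) isCompact_Icc hmax fun x hx => ?_
  · exact (hε.trans_le hx.1).ne'
  · exact ⟨le_max_right _ _, max_le_max_right ε hx.2⟩

lemma hasDerivAt_log_max_of_lt {ε R : ℝ} (hR : R < ε) :
    HasDerivAt (fun x => log (max x ε)) 0 R := by
  refine (hasDerivAt_const R (log ε)).congr_of_eventuallyEq ?_
  filter_upwards [eventually_lt_nhds hR] with x hx
  rw [max_eq_right hx.le]

lemma hasDerivAt_log_max_of_gt {ε R : ℝ} (hR : ε < R) (hR0 : R ≠ 0) :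
    HasDerivAt (fun x => log (max x ε)) R⁻¹ R := by
  refine (Real.hasDerivAt_log hR0).congr_of_eventuallyEq ?_
  filter_upwards [eventually_gt_nhds hR] with x hx
  rw [max_eq_left hx.le]

lemma exists_forall_add_mul_sub_le_of_convexOn {f : ℝ → ℝ} {S : Set ℝ} (hf : ConvexOn ℝ S f)
    {x : ℝ} (hx : x ∈ interior S) : ∃ m, ∀ y ∈ S, f x + m * (y - x) ≤ f y := by
  refine ⟨derivWithin f (Ioi x) x, fun y hy => ?_⟩
  rcases lt_trichotomy x y with hxy | rfl | hxy
  · have hslope := hf.rightDeriv_le_slope_of_mem_interior hx hy hxy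
    rw [slope_def_field, le_div_iff₀ (sub_pos.2 hxy)] at hslope
    linarith
  · simp
  · have hslope := (hf.slope_le_leftDeriv_of_mem_interior hy hx hxy).trans
      (hf.leftDeriv_le_rightDeriv_of_mem_interior hx)
    rw [slope_def_field, div_le_iff₀ (sub_pos.2 hxy)] at hslope
    linarith

lemma exists_forall_mul_sub_le_sub_of_convexOn {f : ℝ → ℝ} {S : Set ℝ} (hf : ConvexOn ℝ S f)
    {a : ℝ} (ha : a ∈ interior S) :
    ∃ m, ∀ x ∈ S, ∀ y ∈ S, a < x → x < y → m * (y - x) ≤ f y - f x := by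
  refine ⟨derivWithin f (Ioi a) a, fun x hx y hy hax hxy => ?_⟩
  have hright := hf.rightDeriv_le_slope_of_mem_interior ha hx hax
  rw [slope_def_field] at hright
  have hslope := hright.trans (hf.slope_mono_adjacent (interior_subset ha) hy hax hxy)
  rwa [le_div_iff₀ (sub_pos.2 hxy)] at hslope

lemma mul_mul_pow_sub_one_le {n : ℕ} (hn : n ≠ 0) {q v : ℝ} (hq : 0 ≤ q) (hv : 0 < v) :
    n * (q * v ^ (n - 1)) ≤ q ^ n + ((n : ℝ) - 1) * v ^ n := by
  have hbernoulli : 1 + (n : ℝ) * (q / v - 1) ≤ q ^ n / v ^ n := by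
    rw [← div_pow]
    exact one_add_mul_sub_le_pow (by linarith [div_nonneg hq hv.le]) n
  rw [le_div_iff₀ (by positivity)] at hbernoulli
  have hexpand : (1 + (n : ℝ) * (q / v - 1)) * v ^ n =
      n * (q * v ^ (n - 1)) - ((n : ℝ) - 1) * v ^ n := by
    rw [← pow_sub_one_mul hn v]
    field_simp
    ring
  linarith

/-- The integrand `R^{n-1} Φ̂(r'(R), r(R)/R, …, r(R)/R)` of the modified energy. -/
def energyDensity (n : ℕ) (κ : ℝ) (h r r' : ℝ → ℝ) (R : ℝ) : ℝ :=
  R ^ (n - 1) * PhiHat n κ h (r' R) (r R / R)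

lemma IHatE_eq_of_integrableOn {n : ℕ} {κ : ℝ} {h r r' : ℝ → ℝ}
    (hint : IntegrableOn (energyDensity n κ h r r') (Ioc 0 1)) (lam : ℝ) :
    IHatE n κ lam h r r' =
      ((∫ R in Ioc (0 : ℝ) 1, energyDensity n κ h r r' R) -
        κ * ((n : ℝ) - 1) / n * lam ^ n * log lam : ℝ) := by
  rw [EReal.coe_sub, coe_integral_eq_lintegral_sub_lintegral hint]
  rfl

lemma coe_integral_sub_le_IHatE {n : ℕ} {κ : ℝ} {h r r' D : ℝ → ℝ}
    (hD : IntegrableOn D (Ioc 0 1))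
    (hle : D ≤ᵐ[volume.restrict (Ioc 0 1)] energyDensity n κ h r r') (lam : ℝ) :
    ((∫ R in Ioc (0 : ℝ) 1, D R) - κ * ((n : ℝ) - 1) / n * lam ^ n * log lam : ℝ) ≤
      IHatE n κ lam h r r' := by
  rw [EReal.coe_sub]
  exact EReal.sub_le_sub (coe_integral_le_lintegral_sub_lintegral hD hle) le_rfl

lemma pow_mul_del {n : ℕ} (r r' : ℝ → ℝ) {R : ℝ} (hR : R ≠ 0) :
    R ^ (n - 1) * del n r r' R = r' R * r R ^ (n - 1) := by
  rw [del, div_pow]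
  field_simp

lemma energyDensity_eq {n : ℕ} (κ : ℝ) (h r r' : ℝ → ℝ) {R : ℝ} (hR : 0 < R) (hr : 0 < r R) :
    energyDensity n κ h r r' R =
      κ / n * (R ^ (n - 1) * r' R ^ n) + R ^ (n - 1) * h (del n r r' R) +
        κ * (r' R * r R ^ (n - 1)) *
          (((n : ℝ) - 1) / n + ((n : ℝ) - 1) * (log (r R) - log R)) := by
  rw [← pow_mul_del r r' hR.ne', energyDensity, PhiHat, Real.log_div hr.ne' hR.ne', del]
  ring

section Admissible

variable {lam : ℝ} {r r' : ℝ → ℝ}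

lemma Adm.eqOn_intervalIntegral (hr : Adm lam r r') :
    EqOn (fun R => r 0 + ∫ t in (0 : ℝ)..R, r' t) r (Icc 0 1) := fun R hR => by
  simp only [hr.ftc R hR, intervalIntegral.integral_of_le hR.1]

lemma Adm.intervalIntegrable (hr : Adm lam r r') : IntervalIntegrable r' volume 0 1 :=
  (intervalIntegrable_iff_integrableOn_Ioc_of_le zero_le_one).2 hr.intg

lemma Adm.absolutelyContinuousOnInterval (hr : Adm lam r r') :
    AbsolutelyContinuousOnInterval r 0 1 := by
  have hconst : AbsolutelyContinuousOnInterval (fun _ => r 0) 0 1 :=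
    (LipschitzWith.const (r 0)).lipschitzOnWith.absolutelyContinuousOnInterval
  have hprim := hr.intervalIntegrable.absolutelyContinuousOnInterval_intervalIntegral
    (c := 0) (by simp)
  refine absolutelyContinuousOnInterval_congr (hconst.fun_add hprim) ?_
  rw [uIcc_of_le zero_le_one]
  exact hr.eqOn_intervalIntegral

lemma Adm.ae_hasDerivAt (hr : Adm lam r r') :
    ∀ᵐ R ∂volume.restrict (Ioc (0 : ℝ) 1), HasDerivAt r (r' R) R := by
  rw [← restrict_Ioo_eq_restrict_Ioc, ae_restrict_iff' measurableSet_Ioo]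
  filter_upwards [hr.intervalIntegrable.ae_hasDerivAt_integral] with R hder hR
  rw [uIcc_of_le zero_le_one] at hder
  refine ((hder (Ioo_subset_Icc_self hR) 0 (by simp)).const_add (r 0)).congr_of_eventuallyEq ?_
  exact (hr.eqOn_intervalIntegral.eventuallyEq_of_mem (Icc_mem_nhds hR.1 hR.2)).symm

lemma Adm.pos (hr : Adm lam r r') {R : ℝ} (hR : R ∈ Ioc (0 : ℝ) 1) : 0 < r R := by
  have hsub : Ioc 0 R ⊆ Ioc (0 : ℝ) 1 := Ioc_subset_Ioc_right hR.2
  have hne : NeZero (volume.restrict (Ioc 0 R)) := ⟨by simp [Measure.restrict_eq_zero, hR.1]⟩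
  have hint : 0 < ∫ t in Ioc 0 R, r' t :=
    integral_pos_of_ae_pos (hr.intg.mono_set hsub) (ae_restrict_of_ae_restrict_of_subset hsub
      hr.derivPos)
  rw [hr.ftc R (Ioc_subset_Icc_self hR)]
  exact add_pos_of_nonneg_of_pos hr.c0 hint

lemma Adm.const_mul (hr : Adm lam r r') {c : ℝ} (hc : 0 < c) :
    Adm (c * lam) (fun R => c * r R) fun R => c * r' R where
  intg := hr.intg.const_mul c
  ftc R hR := by rw [hr.ftc R hR, integral_const_mul, mul_add]
  derivPos := hr.derivPos.mono fun _ hR => mul_pos hc hR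
  bc := by rw [hr.bc]
  c0 := mul_nonneg hc.le hr.c0

lemma Adm.ae_del_pos (hr : Adm lam r r') (n : ℕ) :
    ∀ᵐ R ∂volume.restrict (Ioc (0 : ℝ) 1), 0 < del n r r' R := by
  filter_upwards [hr.derivPos, ae_restrict_mem measurableSet_Ioc] with R hr' hR
  exact mul_pos hr' (pow_pos (div_pos (hr.pos hR) hR.1) _)

end Admissible

/-- The potential `rⁿ log (r / max R ε)`, whose derivative is the logarithmic part of the energy
density for `ε < R`. It is split as a difference so as to be absolutely continuous up to the
centre also when `r 0 = 0`; without the cutoff `ε` it need not tend to `0` there. -/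
def cutoffLogPotential (n : ℕ) (ε : ℝ) (r : ℝ → ℝ) (R : ℝ) : ℝ :=
  r R ^ n * log (r R) - r R ^ n * log (max R ε)

section CutoffLogPotential

variable {n : ℕ} {ε : ℝ} {r : ℝ → ℝ}

lemma absolutelyContinuousOnInterval_cutoffLogPotential (hn : 2 ≤ n) (hε : 0 < ε) {a b : ℝ}
    (hr : AbsolutelyContinuousOnInterval r a b) :
    AbsolutelyContinuousOnInterval (cutoffLogPotential n ε r) a b :=
  (absolutelyContinuousOnInterval_comp_of_contDiff (contDiff_one_pow_mul_log hn) hr).fun_sub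
    ((absolutelyContinuousOnInterval_pow hr n).fun_mul
      (absolutelyContinuousOnInterval_log_max hε))

lemma hasDerivAt_cutoffLogPotential (hn : 2 ≤ n) {q l R : ℝ} (hr : HasDerivAt r q R)
    (hl : HasDerivAt (fun x => log (max x ε)) l R) :
    HasDerivAt (cutoffLogPotential n ε r)
      (q * r R ^ (n - 1) * (1 + n * (log (r R) - log (max R ε))) - r R ^ n * l) R := by
  refine (((hasDerivAt_pow_mul_log hn (r R)).comp R hr).fun_sub
    ((hr.fun_pow n).fun_mul hl)).congr_deriv ?_
  ring

end CutoffLogPotential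

section LowerBound

variable {n : ℕ} {κ ε : ℝ} {h r r' : ℝ → ℝ} {R : ℝ}

lemma deriv_add_le_energyDensity_of_lt (hn : 2 ≤ n) (hκ : 0 ≤ κ) (hR : 0 < R) (hr : 0 < r R)
    (hr' : 0 < r' R) (hder : HasDerivAt r (r' R) R) (hRε : R < ε) :
    κ * ((n : ℝ) - 1) / n * deriv (cutoffLogPotential n ε r) R +
      R ^ (n - 1) * h (del n r r' R) ≤ energyDensity n κ h r r' R := by
  have hn1 : (1 : ℝ) ≤ n := by exact_mod_cast (by omega : 1 ≤ n)
  have hlog : κ * (r' R * r R ^ (n - 1)) * (((n : ℝ) - 1) * (log (r R) - log ε)) ≤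
      κ * (r' R * r R ^ (n - 1)) * (((n : ℝ) - 1) * (log (r R) - log R)) := by
    have := sub_nonneg.2 hn1
    gcongr
  have hpow : 0 ≤ κ / n * (R ^ (n - 1) * r' R ^ n) := by positivity
  rw [energyDensity_eq κ h r r' hR hr,
    (hasDerivAt_cutoffLogPotential hn hder (hasDerivAt_log_max_of_lt hRε)).deriv,
    max_eq_right hRε.le]
  have hexpand : κ * ((n : ℝ) - 1) / n *
      (r' R * r R ^ (n - 1) * (1 + n * (log (r R) - log ε)) - r R ^ n * 0) =
      κ * (r' R * r R ^ (n - 1)) * (((n : ℝ) - 1) / n + ((n : ℝ) - 1) * (log (r R) - log ε)) := by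
    field_simp
    ring
  linarith

lemma deriv_add_le_energyDensity_of_gt (hn : 2 ≤ n) (hκ : 0 ≤ κ) (hR : 0 < R) (hr : 0 < r R)
    (hr' : 0 < r' R) (hder : HasDerivAt r (r' R) R) (hRε : ε < R) :
    κ * ((n : ℝ) - 1) / n * deriv (cutoffLogPotential n ε r) R +
      κ / n * deriv (fun x => r x ^ n) R + R ^ (n - 1) * h (del n r r' R) ≤
        energyDensity n κ h r r' R := by
  have hn0 : n ≠ 0 := by omega
  have hamgm : κ / n * R ^ (n - 1) * (n * (r' R * (r R / R) ^ (n - 1))) ≤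
      κ / n * R ^ (n - 1) * (r' R ^ n + ((n : ℝ) - 1) * (r R / R) ^ n) :=
    mul_le_mul_of_nonneg_left (mul_mul_pow_sub_one_le hn0 hr'.le (div_pos hr hR)) (by positivity)
  rw [energyDensity_eq κ h r r' hR hr, (hder.fun_pow n).deriv,
    (hasDerivAt_cutoffLogPotential hn hder (hasDerivAt_log_max_of_gt hRε hR.ne')).deriv,
    max_eq_left hRε.le]
  have hleft : κ / n * R ^ (n - 1) * (n * (r' R * (r R / R) ^ (n - 1))) =
      κ / n * (n * r R ^ (n - 1) * r' R) := by
    rw [div_pow]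
    field_simp
  have hright : R ^ (n - 1) * (r R / R) ^ n = r R ^ n * R⁻¹ := by
    rw [div_pow, ← pow_sub_one_mul hn0 R]
    field_simp
  have hexpand : κ * ((n : ℝ) - 1) / n *
      (r' R * r R ^ (n - 1) * (1 + n * (log (r R) - log R)) - r R ^ n * R⁻¹) =
      κ * (r' R * r R ^ (n - 1)) * (((n : ℝ) - 1) / n + ((n : ℝ) - 1) * (log (r R) - log R)) -
        κ / n * ((n : ℝ) - 1) * (r R ^ n * R⁻¹) := by
    field_simp
  rw [hleft] at hamgm
  rw [hexpand, ← hright]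
  linarith

lemma add_deriv_pow_le_pow_mul {c m : ℝ} (hn : n ≠ 0) (hR : 0 < R)
    (hder : HasDerivAt r (r' R) R) (hle : c + m * del n r r' R ≤ h (del n r r' R)) :
    c * R ^ (n - 1) + m / n * deriv (fun x => r x ^ n) R ≤ R ^ (n - 1) * h (del n r r' R) := by
  have hpow := mul_le_mul_of_nonneg_left hle (pow_nonneg hR.le (n - 1))
  have hdel := pow_mul_del (n := n) r r' hR.ne'
  rw [(hder.fun_pow n).deriv]
  calc c * R ^ (n - 1) + m / n * (n * r R ^ (n - 1) * r' R)
      = c * R ^ (n - 1) + m * (r' R * r R ^ (n - 1)) := by field_simp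
    _ = R ^ (n - 1) * (c + m * del n r r' R) := by rw [← hdel]; ring
    _ ≤ R ^ (n - 1) * h (del n r r' R) := hpow

end LowerBound

/-- The lower bound for the energy density obtained from an affine minorant `c + m y` of `h`. Up to
the weight `R^{n-1}` it consists of derivatives of functions of `r` and `R`, so that its integral
depends only on `r 0`, `r ε` and `r 1`. -/
def lowerDensity (n : ℕ) (κ c m ε : ℝ) (r : ℝ → ℝ) (R : ℝ) : ℝ :=
  κ * ((n : ℝ) - 1) / n * deriv (cutoffLogPotential n ε r) R +
    (Ioi ε).indicator (fun R => κ / n * deriv (fun x => r x ^ n) R) R +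
    (c * R ^ (n - 1) + m / n * deriv (fun x => r x ^ n) R)

section LowerDensity

variable {n : ℕ} {κ ε : ℝ} {r : ℝ → ℝ}

lemma lowerDensity_ae_le_energyDensity (hn : 2 ≤ n) (hκ : 0 ≤ κ) {h r' : ℝ → ℝ} {c m lam : ℝ}
    (hle : ∀ y, 0 < y → c + m * y ≤ h y) (hr : Adm lam r r') (ε : ℝ) :
    lowerDensity n κ c m ε r ≤ᵐ[volume.restrict (Ioc 0 1)] energyDensity n κ h r r' := by
  filter_upwards [hr.ae_hasDerivAt, hr.derivPos, hr.ae_del_pos n,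
    ae_restrict_mem measurableSet_Ioc, ae_restrict_of_ae (Measure.ae_ne volume ε)]
    with R hder hr' hdel hR hRε
  have hminorant := add_deriv_pow_le_pow_mul (by omega) hR.1 hder (hle _ hdel)
  rw [lowerDensity]
  rcases hRε.lt_or_gt with hlt | hgt
  · rw [indicator_of_notMem (notMem_Ioi.2 hlt.le)]
    linarith [deriv_add_le_energyDensity_of_lt (h := h) hn hκ hR.1 (hr.pos hR) hr' hder hlt]
  · rw [indicator_of_mem (mem_Ioi.2 hgt)]
    linarith [deriv_add_le_energyDensity_of_gt (h := h) hn hκ hR.1 (hr.pos hR) hr' hder hgt]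

lemma integrableOn_lowerDensity (hn : 2 ≤ n) (hε : 0 < ε)
    (hr : AbsolutelyContinuousOnInterval r 0 1) (c m : ℝ) :
    IntegrableOn (lowerDensity n κ c m ε r) (Ioc 0 1) := by
  have hpot := integrableOn_Ioc_deriv_of_absolutelyContinuous zero_le_one
    (absolutelyContinuousOnInterval_cutoffLogPotential hn hε hr)
  have hpow := integrableOn_Ioc_deriv_of_absolutelyContinuous zero_le_one
    (absolutelyContinuousOnInterval_pow hr n)
  exact ((hpot.const_mul _).add ((hpow.const_mul _).indicator measurableSet_Ioi)).add
    (((integrableOn_Ioc_pow _).const_mul c).add (hpow.const_mul _))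

lemma integral_lowerDensity (hn : 2 ≤ n) (hε : ε ∈ Ioo (0 : ℝ) 1)
    (hr : AbsolutelyContinuousOnInterval r 0 1) (hr0 : r 0 = 0) (c m : ℝ) :
    ∫ R in Ioc (0 : ℝ) 1, lowerDensity n κ c m ε r R =
      κ * ((n : ℝ) - 1) / n * r 1 ^ n * log (r 1) + κ / n * (r 1 ^ n - r ε ^ n) +
        (c + m * r 1 ^ n) / n := by
  have hn0 : n ≠ 0 := by omega
  have hpot := absolutelyContinuousOnInterval_cutoffLogPotential hn hε.1 hr
  have hpow := absolutelyContinuousOnInterval_pow hr n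
  have hpot_int := integrableOn_Ioc_deriv_of_absolutelyContinuous zero_le_one hpot
  have hpow_int := integrableOn_Ioc_deriv_of_absolutelyContinuous zero_le_one hpow
  have hc_int := (integrableOn_Ioc_pow (n - 1)).const_mul c
  have houter : ∫ R in Ioc (0 : ℝ) 1,
      (Ioi ε).indicator (fun R => κ / n * deriv (fun x => r x ^ n) R) R =
        κ / n * (r 1 ^ n - r ε ^ n) := by
    have hmono : uIcc ε 1 ⊆ uIcc 0 1 := uIcc_subset_uIcc_right (by
      rw [uIcc_of_le zero_le_one]; exact Ioo_subset_Icc_self hε)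
    rw [setIntegral_indicator measurableSet_Ioi, Ioc_inter_Ioi, max_eq_right hε.1.le,
      integral_const_mul, integral_Ioc_deriv_of_absolutelyContinuous hε.2.le (hpow.mono hmono)]
  simp only [lowerDensity]
  rw [integral_add, integral_add, integral_add, houter, integral_const_mul, integral_const_mul,
    integral_const_mul, integral_Ioc_pow_sub_one hn0,
    integral_Ioc_deriv_of_absolutelyContinuous zero_le_one hpot,
    integral_Ioc_deriv_of_absolutelyContinuous zero_le_one hpow]
  · simp only [cutoffLogPotential, hr0, zero_pow hn0, max_eq_left hε.2.le, log_one]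
    ring
  · exact hc_int
  · exact hpow_int.const_mul _
  · exact hpot_int.const_mul _
  · exact (hpow_int.const_mul _).indicator measurableSet_Ioi
  · exact (hpot_int.const_mul _).add ((hpow_int.const_mul _).indicator measurableSet_Ioi)
  · exact hc_int.add (hpow_int.const_mul _)

end LowerDensity

section NoCavity

variable {n : ℕ} {κ lam : ℝ} {h r r' : ℝ → ℝ}

lemma coe_sub_le_IHatE_of_affine_minorant {c m ε : ℝ} (hn : 2 ≤ n) (hκ : 0 ≤ κ)
    (hle : ∀ y, 0 < y → c + m * y ≤ h y) (hr : Adm lam r r') (hr0 : r 0 = 0)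
    (hε : ε ∈ Ioo (0 : ℝ) 1) :
    (κ / n * (lam ^ n - r ε ^ n) + (c + m * lam ^ n) / n : ℝ) ≤ IHatE n κ lam h r r' := by
  have hac := hr.absolutelyContinuousOnInterval
  have hbound := coe_integral_sub_le_IHatE (integrableOn_lowerDensity hn hε.1 hac c m)
    (lowerDensity_ae_le_energyDensity hn hκ hle hr ε) lam
  rw [integral_lowerDensity hn hε hac hr0, hr.bc] at hbound
  refine (EReal.coe_le_coe_iff.2 (le_of_eq ?_)).trans hbound
  ring

lemma coe_le_IHatE_of_affine_minorant {c m : ℝ} (hn : 2 ≤ n) (hκ : 0 ≤ κ)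
    (hle : ∀ y, 0 < y → c + m * y ≤ h y) (hr : Adm lam r r') (hr0 : r 0 = 0) :
    (κ / n * lam ^ n + (c + m * lam ^ n) / n : ℝ) ≤ IHatE n κ lam h r r' := by
  have hr_lim : Tendsto r (nhdsWithin 0 (Ioo 0 1)) (nhds 0) := by
    have hcont := hr.absolutelyContinuousOnInterval.continuousOn 0 left_mem_uIcc
    rw [ContinuousWithinAt, hr0, uIcc_of_le zero_le_one] at hcont
    exact hcont.mono_left (nhdsWithin_mono _ Ioo_subset_Icc_self)
  have hlim : Tendsto (fun ε => κ / n * (lam ^ n - r ε ^ n) + (c + m * lam ^ n) / n)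
      (nhdsWithin 0 (Ioo 0 1)) (nhds (κ / n * lam ^ n + (c + m * lam ^ n) / n)) := by
    simpa [show n ≠ 0 by omega] using
      (((hr_lim.pow n).const_sub (lam ^ n)).const_mul (κ / n)).add_const ((c + m * lam ^ n) / n)
  have hne : (nhdsWithin (0 : ℝ) (Ioo 0 1)).NeBot := left_nhdsWithin_Ioo_neBot zero_lt_one
  refine le_of_tendsto ((continuous_coe_real_ereal.tendsto _).comp hlim) ?_
  filter_upwards [self_mem_nhdsWithin] with ε hε
  exact coe_sub_le_IHatE_of_affine_minorant hn hκ hle hr hr0 hε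

end NoCavity

lemma PhiHat_mul_mul {n : ℕ} (hn : n ≠ 0) (κ : ℝ) (h : ℝ → ℝ) {lam v : ℝ} (hlam : lam ≠ 0)
    (hv : v ≠ 0) (q : ℝ) :
    PhiHat n κ h (lam * q) (lam * v) =
      lam ^ n * PhiHat n κ 0 q v + h (lam ^ n * (q * v ^ (n - 1))) +
        κ * ((n : ℝ) - 1) * (lam ^ n * log lam) * (q * v ^ (n - 1)) := by
  have hdet : lam * q * (lam * v) ^ (n - 1) = lam ^ n * (q * v ^ (n - 1)) := by
    rw [mul_pow, ← pow_sub_one_mul hn lam]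
    ring
  simp only [PhiHat, hdet, Real.log_mul hlam hv, Pi.zero_apply]
  ring

section Scaling

variable {n : ℕ} {lam d : ℝ} {v v' : ℝ → ℝ}

lemma energyDensity_const_mul (hn : n ≠ 0) (κ : ℝ) (h : ℝ → ℝ) {R : ℝ} (hlam : lam ≠ 0)
    (hR : R ≠ 0) (hv : v R ≠ 0) :
    energyDensity n κ h (fun R => lam * v R) (fun R => lam * v' R) R =
      lam ^ n * energyDensity n κ 0 v v' R +
        (h (lam ^ n * del n v v' R) +
          κ * ((n : ℝ) - 1) * (lam ^ n * log lam) * del n v v' R) * R ^ (n - 1) := by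
  simp only [energyDensity, mul_div_assoc, PhiHat_mul_mul hn κ h hlam (div_ne_zero hv hR), del]
  ring

lemma IHatE_const_mul_of_del_eq (hn : n ≠ 0) (κ : ℝ) (h : ℝ → ℝ) (hlam : lam ≠ 0)
    (hv : ∀ R ∈ Ioc (0 : ℝ) 1, v R ≠ 0) (hdel : ∀ R ∈ Ioc (0 : ℝ) 1, del n v v' R = d)
    (hint : IntegrableOn (energyDensity n κ 0 v v') (Ioc 0 1)) :
    IHatE n κ lam h (fun R => lam * v R) (fun R => lam * v' R) =
      (lam ^ n * (∫ R in Ioc (0 : ℝ) 1, energyDensity n κ 0 v v' R) + h (lam ^ n * d) / n -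
        κ * (1 - d) * ((n : ℝ) - 1) / n * (lam ^ n * log lam) : ℝ) := by
  set C := h (lam ^ n * d) + κ * ((n : ℝ) - 1) * (lam ^ n * log lam) * d with hC
  have heq : EqOn (fun R => lam ^ n * energyDensity n κ 0 v v' R + C * R ^ (n - 1))
      (energyDensity n κ h (fun R => lam * v R) fun R => lam * v' R) (Ioc 0 1) := fun R hR => by
    rw [energyDensity_const_mul hn κ h hlam hR.1.ne' (hv R hR), hdel R hR]
  have hpow : IntegrableOn (fun R => C * R ^ (n - 1)) (Ioc 0 1) :=
    (integrableOn_Ioc_pow (n - 1)).const_mul C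
  have hsum : IntegrableOn (fun R => lam ^ n * energyDensity n κ 0 v v' R + C * R ^ (n - 1))
      (Ioc 0 1) := (hint.const_mul _).add hpow
  rw [IHatE_eq_of_integrableOn (hsum.congr_fun heq measurableSet_Ioc),
    ← setIntegral_congr_fun measurableSet_Ioc heq, integral_add (hint.const_mul _) hpow,
    integral_const_mul, integral_const_mul, integral_Ioc_pow_sub_one hn, hC]
  congr 1
  ring

end Scaling

lemma energyDensity_zero_id (n : ℕ) (κ : ℝ) {R : ℝ} (hR : R ≠ 0) :
    energyDensity n κ 0 (fun R => R) (fun _ => 1) R =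
      κ * (1 / n + ((n : ℝ) - 1) / n) * R ^ (n - 1) := by
  simp only [energyDensity, PhiHat, div_self hR, Pi.zero_apply, one_pow, log_one]
  ring

lemma IHatE_homogeneous {n : ℕ} (hn : n ≠ 0) (κ : ℝ) (h : ℝ → ℝ) {lam : ℝ} (hlam : lam ≠ 0) :
    IHatE n κ lam h (fun R => lam * R) (fun _ => lam) =
      (κ / n * lam ^ n + h (lam ^ n) / n : ℝ) := by
  have hdens : EqOn (fun R : ℝ => κ * (1 / n + ((n : ℝ) - 1) / n) * R ^ (n - 1))
      (energyDensity n κ 0 (fun R => R) fun _ => 1) (Ioc 0 1) := fun R hR =>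
    (energyDensity_zero_id n κ hR.1.ne').symm
  have hpow : IntegrableOn (fun R : ℝ => κ * (1 / n + ((n : ℝ) - 1) / n) * R ^ (n - 1))
      (Ioc 0 1) := (integrableOn_Ioc_pow (n - 1)).const_mul _
  have hscale := IHatE_const_mul_of_del_eq (v := fun R => R) (v' := fun _ => 1) (d := 1) hn κ h
    hlam (fun R hR => hR.1.ne') (fun R hR => by simp [del, div_self hR.1.ne'])
    (hpow.congr_fun hdens measurableSet_Ioc)
  rw [← setIntegral_congr_fun measurableSet_Ioc hdens, integral_const_mul,
    integral_Ioc_pow_sub_one hn] at hscale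
  simp only [mul_one] at hscale
  rw [hscale]
  congr 1
  field_simp
  ring

lemma IHatE_homogeneous_le {n : ℕ} (hn : 2 ≤ n) {κ lam : ℝ} (hκ : 0 ≤ κ) (hlam : 0 < lam)
    {h r r' : ℝ → ℝ} (hconv : ConvexOn ℝ (Ioi 0) h) (hr : Adm lam r r') (hr0 : r 0 = 0) :
    IHatE n κ lam h (fun R => lam * R) (fun _ => lam) ≤ IHatE n κ lam h r r' := by
  have hmem : lam ^ n ∈ interior (Ioi (0 : ℝ)) := by
    rw [interior_Ioi]
    exact pow_pos hlam n
  obtain ⟨m, hm⟩ := exists_forall_add_mul_sub_le_of_convexOn hconv hmem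
  have hbound := coe_le_IHatE_of_affine_minorant (h := h) (c := h (lam ^ n) - m * lam ^ n)
    (m := m) hn hκ (fun y hy => by linarith [hm y hy]) hr hr0
  rwa [sub_add_cancel, ← IHatE_homogeneous (by omega) κ h hlam.ne'] at hbound

lemma integrableOn_energyDensity_zero (n : ℕ) (κ : ℝ) {v v' : ℝ → ℝ}
    (hv : ContinuousOn v (Icc 0 1)) (hv' : ContinuousOn v' (Icc 0 1))
    (hpos : ∀ R ∈ Icc (0 : ℝ) 1, 0 < v R) :
    IntegrableOn (energyDensity n κ 0 v v') (Ioc 0 1) := by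
  have hlog : ContinuousOn (fun R => log (v R)) (Icc 0 1) := hv.log fun R hR => (hpos R hR).ne'
  have hregular : IntegrableOn (fun R => κ / n * (R ^ (n - 1) * v' R ^ n) +
      κ * (v' R * v R ^ (n - 1)) * (((n : ℝ) - 1) / n + ((n : ℝ) - 1) * log (v R))) (Ioc 0 1) :=
    (ContinuousOn.integrableOn_Icc (by fun_prop)).mono_set Ioc_subset_Icc_self
  have hcoeff : ContinuousOn (fun R => κ * (v' R * v R ^ (n - 1)) * ((n : ℝ) - 1)) (uIcc 0 1) := by
    rw [uIcc_of_le zero_le_one]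
    fun_prop
  have hsingular : IntegrableOn (fun R => κ * (v' R * v R ^ (n - 1)) * ((n : ℝ) - 1) * log R)
      (Ioc 0 1) :=
    (intervalIntegrable_iff_integrableOn_Ioc_of_le zero_le_one).1
      (intervalIntegral.intervalIntegrable_log'.continuousOn_mul hcoeff)
  refine (hregular.sub hsingular).congr_fun (fun R hR => ?_) measurableSet_Ioc
  simp only [energyDensity_eq κ 0 v v' hR.1 (hpos R (Ioc_subset_Icc_self hR)), Pi.sub_apply,
    Pi.zero_apply]
  ring

/-- The cavitating deformation `R ↦ (dRⁿ + 1 - d)^{1/n}` with unit boundary value, whose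
determinant function is the constant `d`. -/
def unitCavity (n : ℕ) (d R : ℝ) : ℝ :=
  (d * R ^ n + 1 - d) ^ ((1 : ℝ) / n)

/-- The derivative of `unitCavity n d`. -/
def unitCavityDeriv (n : ℕ) (d R : ℝ) : ℝ :=
  d * R ^ (n - 1) * (d * R ^ n + 1 - d) ^ ((1 : ℝ) / n - 1)

section UnitCavity

variable {n : ℕ} {d R : ℝ}

lemma mul_pow_add_one_sub_pos (n : ℕ) (hd : d ∈ Ioo (0 : ℝ) 1) (hR : 0 ≤ R) :
    0 < d * R ^ n + 1 - d := by
  linarith [mul_nonneg hd.1.le (pow_nonneg hR n), hd.2]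

lemma unitCavity_pos (n : ℕ) (hd : d ∈ Ioo (0 : ℝ) 1) (hR : 0 ≤ R) : 0 < unitCavity n d R :=
  rpow_pos_of_pos (mul_pow_add_one_sub_pos n hd hR) _

lemma hasDerivAt_unitCavity (hn : n ≠ 0) (hd : d ∈ Ioo (0 : ℝ) 1) (hR : 0 ≤ R) :
    HasDerivAt (unitCavity n d) (unitCavityDeriv n d R) R := by
  have hbase : HasDerivAt (fun R : ℝ => d * R ^ n + 1 - d) (d * (n * R ^ (n - 1))) R :=
    (((hasDerivAt_pow n R).const_mul d).add_const 1).sub_const d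
  refine (hbase.rpow_const (p := (1 : ℝ) / n)
    (Or.inl (mul_pow_add_one_sub_pos n hd hR).ne')).congr_deriv ?_
  rw [unitCavityDeriv]
  field_simp

lemma continuousOn_unitCavity (hn : n ≠ 0) (hd : d ∈ Ioo (0 : ℝ) 1) :
    ContinuousOn (unitCavity n d) (Icc 0 1) := fun _ hR =>
  (hasDerivAt_unitCavity hn hd hR.1).continuousAt.continuousWithinAt

lemma continuousOn_unitCavityDeriv (n : ℕ) (hd : d ∈ Ioo (0 : ℝ) 1) :
    ContinuousOn (unitCavityDeriv n d) (Icc 0 1) := by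
  have hbase : ContinuousOn (fun R : ℝ => d * R ^ n + 1 - d) (Icc 0 1) := by fun_prop
  exact ContinuousOn.mul (by fun_prop)
    (hbase.rpow_const fun R hR => Or.inl (mul_pow_add_one_sub_pos n hd hR.1).ne')

lemma unitCavityDeriv_mul_unitCavity_pow (hn : n ≠ 0) (hd : d ∈ Ioo (0 : ℝ) 1) (hR : 0 ≤ R) :
    unitCavityDeriv n d R * unitCavity n d R ^ (n - 1) = d * R ^ (n - 1) := by
  have hbase := mul_pow_add_one_sub_pos n hd hR
  have hexp : (1 : ℝ) / n - 1 + 1 / n * (n - 1) = 0 := by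
    field_simp
    ring
  rw [unitCavity, unitCavityDeriv, ← rpow_mul_natCast hbase.le, mul_assoc, ← rpow_add hbase,
    Nat.cast_pred (Nat.pos_of_ne_zero hn), hexp, rpow_zero, mul_one]

lemma del_unitCavity (hn : n ≠ 0) (hd : d ∈ Ioo (0 : ℝ) 1) (hR : 0 < R) :
    del n (unitCavity n d) (unitCavityDeriv n d) R = d := by
  have hpow := pow_mul_del (n := n) (unitCavity n d) (unitCavityDeriv n d) hR.ne'
  rw [unitCavityDeriv_mul_unitCavity_pow hn hd hR.le, mul_comm d] at hpow
  exact mul_left_cancel₀ (pow_ne_zero _ hR.ne') hpow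

lemma adm_unitCavity (hn : n ≠ 0) (hd : d ∈ Ioo (0 : ℝ) 1) :
    Adm 1 (unitCavity n d) (unitCavityDeriv n d) where
  intg := (continuousOn_unitCavityDeriv n hd).integrableOn_Icc.mono_set Ioc_subset_Icc_self
  ftc R hR := by
    have hftc := intervalIntegral.integral_eq_sub_of_hasDerivAt (a := 0) (b := R)
      (fun x hx => hasDerivAt_unitCavity hn hd (by rw [uIcc_of_le hR.1] at hx; exact hx.1))
      (((continuousOn_unitCavityDeriv n hd).mono
        (Icc_subset_Icc_right hR.2)).intervalIntegrable_of_Icc hR.1)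
    rw [← intervalIntegral.integral_of_le hR.1, hftc, add_sub_cancel]
  derivPos := by
    filter_upwards [ae_restrict_mem measurableSet_Ioc] with R hR
    exact mul_pos (mul_pos hd.1 (pow_pos hR.1 _))
      (rpow_pos_of_pos (mul_pow_add_one_sub_pos n hd hR.1.le) _)
  bc := by simp [unitCavity]
  c0 := (unitCavity_pos n hd le_rfl).le

lemma IHatE_const_mul_unitCavity (hn : n ≠ 0) (hd : d ∈ Ioo (0 : ℝ) 1) (κ : ℝ) (h : ℝ → ℝ)
    {lam : ℝ} (hlam : lam ≠ 0) :
    IHatE n κ lam h (fun R => lam * unitCavity n d R) (fun R => lam * unitCavityDeriv n d R) =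
      (lam ^ n * (∫ R in Ioc (0 : ℝ) 1,
          energyDensity n κ 0 (unitCavity n d) (unitCavityDeriv n d) R) +
        h (lam ^ n * d) / n - κ * (1 - d) * ((n : ℝ) - 1) / n * (lam ^ n * log lam) : ℝ) :=
  IHatE_const_mul_of_del_eq hn κ h hlam (fun _ hR => (unitCavity_pos n hd hR.1.le).ne')
    (fun _ hR => del_unitCavity hn hd hR.1)
    (integrableOn_energyDensity_zero n κ (continuousOn_unitCavity hn hd)
      (continuousOn_unitCavityDeriv n hd) fun _ hR => unitCavity_pos n hd hR.1)

end UnitCavity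

lemma eventually_IHatE_const_mul_unitCavity_lt {n : ℕ} (hn : 2 ≤ n) {κ : ℝ} (hκ : 0 < κ)
    {h : ℝ → ℝ} (hconv : ConvexOn ℝ (Ioi 0) h) {d : ℝ} (hd : d ∈ Ioo (0 : ℝ) 1) :
    ∀ᶠ lam in atTop,
      IHatE n κ lam h (fun R => lam * unitCavity n d R) (fun R => lam * unitCavityDeriv n d R) <
        IHatE n κ lam h (fun R => lam * R) (fun _ => lam) := by
  have hn0 : n ≠ 0 := by omega
  have hn2 : (2 : ℝ) ≤ n := by exact_mod_cast hn
  obtain ⟨m, hm⟩ := exists_forall_mul_sub_le_sub_of_convexOn hconv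
    (a := 1) (by simp [interior_Ioi])
  have hcoeff : 0 < κ * (1 - d) * ((n : ℝ) - 1) / n :=
    div_pos (mul_pos (mul_pos hκ (by linarith [hd.2])) (by linarith)) (by linarith)
  set A := ∫ R in Ioc (0 : ℝ) 1, energyDensity n κ 0 (unitCavity n d) (unitCavityDeriv n d) R
  have hlog : ∀ᶠ lam in atTop,
      A - κ / n - m * (1 - d) / n < κ * (1 - d) * ((n : ℝ) - 1) / n * log lam :=
    (tendsto_log_atTop.const_mul_atTop hcoeff).eventually_gt_atTop _
  have hlarge : ∀ᶠ lam : ℝ in atTop, 1 < lam ^ n * d :=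
    ((tendsto_pow_atTop hn0).atTop_mul_const hd.1).eventually_gt_atTop 1
  filter_upwards [hlog, hlarge, eventually_gt_atTop 0] with lam hlog hlarge hlam
  have hpow : 0 < lam ^ n := pow_pos hlam n
  have hshrink : lam ^ n * d < lam ^ n := mul_lt_of_lt_one_right hpow hd.2
  have hslope : m * (lam ^ n - lam ^ n * d) / n ≤ (h (lam ^ n) - h (lam ^ n * d)) / n := by
    gcongr
    exact hm _ (mem_Ioi.2 (by linarith)) _ hpow hlarge hshrink
  have hmul := mul_lt_mul_of_pos_left hlog hpow
  rw [IHatE_const_mul_unitCavity hn0 hd κ h hlam.ne', IHatE_homogeneous hn0 κ h hlam.ne',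
    EReal.coe_lt_coe_iff]
  linear_combination hmul + hslope

theorem stmt16_general (n : ℕ) (hn : 2 ≤ n) (κ : ℝ) (hκ : 0 < κ) (h : ℝ → ℝ)
    (hconv : ConvexOn ℝ (Set.Ioi 0) h) :
    (∃ lam₀ : ℝ, 0 < lam₀ ∧ ∀ lam : ℝ, lam₀ < lam →
      ∀ r r' : ℝ → ℝ, Adm lam r r' →
        (∀ s s' : ℝ → ℝ, Adm lam s s' → IHatE n κ lam h r r' ≤ IHatE n κ lam h s s') →
        0 < r 0) ∧
    (∀ d ∈ Set.Ioo (0:ℝ) 1, ∃ lam₁ : ℝ, ∀ lam : ℝ, lam₁ < lam →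
      IHatE n κ lam h (fun R => lam * (d * R ^ n + 1 - d) ^ ((1:ℝ) / n))
          (fun R => lam * d * R ^ (n - 1) * (d * R ^ n + 1 - d) ^ ((1:ℝ) / n - 1))
        < IHatE n κ lam h (fun R => lam * R) (fun _ => lam)) := by
  refine ⟨?_, fun d hd => ?_⟩
  · have hd : (1 / 2 : ℝ) ∈ Ioo (0 : ℝ) 1 := by norm_num
    obtain ⟨lam₁, hlt⟩ :=
      eventually_atTop.1 (eventually_IHatE_const_mul_unitCavity_lt hn hκ hconv hd)
    refine ⟨max lam₁ 1, by positivity, fun lam hlam r r' hr hmin => ?_⟩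
    obtain ⟨hlam₁, hlam1⟩ := max_lt_iff.1 hlam
    have hlam0 : 0 < lam := zero_lt_one.trans hlam1
    have hcavity := (adm_unitCavity (n := n) (by omega) hd).const_mul hlam0
    rw [mul_one] at hcavity
    refine hr.c0.lt_of_ne' fun hr0 => (hlt lam hlam₁.le).not_ge ?_
    exact (IHatE_homogeneous_le hn hκ.le hlam0 hconv hr hr0).trans (hmin _ _ hcavity)
  · obtain ⟨lam₁, hlt⟩ :=
      eventually_atTop.1 (eventually_IHatE_const_mul_unitCavity_lt hn hκ hconv hd)
    refine ⟨lam₁, fun lam hlam => ?_⟩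
    simpa only [unitCavity, unitCavityDeriv, ← mul_assoc] using hlt lam hlam.le

/-- for all sufficiently large `λ`, every minimizer of `Î` over `𝒜_λ`
cavitates (`r(0) > 0`); in fact, for `d ∈ (0,1)` the test deformation
`u(R) = λ(dRⁿ + 1 − d)^{1/n}` has `Î(u) < Î(λR)` for all sufficiently large `λ`. -/
theorem stmt16 (n : ℕ) (hn : 2 ≤ n) (κ : ℝ) (hκ : 0 < κ)
    (h h' h'' : ℝ → ℝ) (hh : GoodH h h' h'') (hconv : ConvexOn ℝ (Set.Ioi 0) h)
    (K γ₀ : ℝ) (hK : 0 < K) (hγ₀ : 0 < γ₀)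
    (hctrl : ∀ d : ℝ, 0 < d → ∀ c : ℝ, |c - 1| ≤ γ₀ → |d * h' (c * d)| ≤ K * (h d + 1)) :
    (∃ lam₀ : ℝ, 0 < lam₀ ∧ ∀ lam : ℝ, lam₀ < lam →
      ∀ r r' : ℝ → ℝ, Adm lam r r' →
        (∀ s s' : ℝ → ℝ, Adm lam s s' → IHatE n κ lam h r r' ≤ IHatE n κ lam h s s') →
        0 < r 0) ∧
    (∀ d ∈ Set.Ioo (0:ℝ) 1, ∃ lam₁ : ℝ, ∀ lam : ℝ, lam₁ < lam →
      IHatE n κ lam h (fun R => lam * (d * R ^ n + 1 - d) ^ ((1:ℝ) / n))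
          (fun R => lam * d * R ^ (n - 1) * (d * R ^ n + 1 - d) ^ ((1:ℝ) / n - 1))
        < IHatE n κ lam h (fun R => lam * R) (fun _ => lam)) :=
  stmt16_general n hn κ hκ h hconv

end
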